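/- arXiv:0902.3037 — 2 statements merged into one kernel-verified Lean document; each statement's English description precedes it below -/
import Mathlib

section
/- Let R be a commutative noetherian local ring and M a nonzero finitely generated R-module with finite projective dimension and finite injective dimension. Then R is Gorenstein (i.e., R has finite injective dimension as a module over itself). -/
open CategoryTheory TensorProduct

/-- `pdLE R n M`: the `R`-module `M` has projective dimension at most `n`,
i.e. it admits a projective resolution of length `n`. -/
def pdLE (R : Type) [CommRing R] : ℕ → (M : Type) → (iM : AddCommGroup M) → (jM : Module R M) → Prop
  | 0, M, iM, jM => Module.Projective R M
  | n+1, M, iM, jM =>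
      ∃ (P : Type) (iP : AddCommGroup P) (jP : Module R P) (f : P →ₗ[R] M),
        Module.Projective R P ∧ Function.Surjective f ∧
          pdLE R n (LinearMap.ker f) inferInstance inferInstance

/-- `idLE R n M`: `M` has injective dimension at most `n`,
i.e. it admits an injective resolution of length `n`. -/
def idLE (R : Type) [CommRing R] : ℕ → (M : Type) → (iM : AddCommGroup M) → (jM : Module R M) → Prop
  | 0, M, iM, jM => Module.Injective R M
  | n+1, M, iM, jM =>
      ∃ (I : Type) (iI : AddCommGroup I) (jI : Module R I) (f : M →ₗ[R] I),
        Module.Injective R I ∧ Function.Injective f ∧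
          idLE R n (I ⧸ LinearMap.range f) inferInstance inferInstance

/-- The projective dimension of `M`, as an element of `ℕ∞` (`⊤` means infinite). -/
noncomputable def projDim (R : Type) [CommRing R] (M : Type) [AddCommGroup M] [Module R M] : ℕ∞ :=
  sInf {n : ℕ∞ | ∃ m : ℕ, n = m ∧ pdLE R m M inferInstance inferInstance}

/-- The injective dimension of `M`, as an element of `ℕ∞`. -/
noncomputable def injDim (R : Type) [CommRing R] (M : Type) [AddCommGroup M] [Module R M] : ℕ∞ :=
  sInf {n : ℕ∞ | ∃ m : ℕ, n = m ∧ idLE R m M inferInstance inferInstance}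

/-- A commutative noetherian (local) ring is Gorenstein if it has finite injective
dimension as a module over itself. -/
def IsGorensteinRing (R : Type) [CommRing R] : Prop :=
  ∃ n : ℕ, idLE R n R inferInstance inferInstance

/-- `extGroup R M N i` : the `i`-th Ext module `Ext^i_R(M,N)`. -/
noncomputable def extGroup (R : Type) [CommRing R] (M N : Type) [AddCommGroup M] [Module R M]
    [AddCommGroup N] [Module R N] (i : ℕ) : ModuleCat R :=
  ((Ext R (ModuleCat R) i).obj (Opposite.op (ModuleCat.of R M))).obj (ModuleCat.of R N)

/-- `torGroup R M N i` : the `i`-th Tor module `Tor_i^R(M,N)`. -/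
noncomputable def torGroup (R : Type) [CommRing R] (M N : Type) [AddCommGroup M] [Module R M]
    [AddCommGroup N] [Module R N] (i : ℕ) : ModuleCat R :=
  ((Tor (ModuleCat R) i).obj (ModuleCat.of R M)).obj (ModuleCat.of R N)

/-- `C` is a semidualizing `R`-module: it is finitely generated, the homothety map
`R → Hom_R(C,C)` is bijective, and `Ext^i_R(C,C) = 0` for all `i > 0`. -/
def IsSemidualizing (R : Type) [CommRing R] (C : Type) [AddCommGroup C] [Module R C] : Prop :=
  Module.Finite R C ∧ Function.Bijective (LinearMap.lsmul R C) ∧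
    ∀ i : ℕ, 0 < i → Subsingleton (extGroup R C C i)

/-- `CpdLE R C n M` : `M` has `C`-projective dimension at most `n`, i.e. there is an exact
sequence `0 → C⊗Pₙ → ⋯ → C⊗P₀ → M → 0` with each `Pᵢ` projective. -/
def CpdLE (R C : Type) [CommRing R] [AddCommGroup C] [Module R C] :
    ℕ → (M : Type) → (iM : AddCommGroup M) → (jM : Module R M) → Prop
  | 0, M, iM, jM =>
      ∃ (P : Type) (iP : AddCommGroup P) (jP : Module R P),
        Module.Projective R P ∧ Nonempty ((TensorProduct R C P) ≃ₗ[R] M)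
  | n+1, M, iM, jM =>
      ∃ (P : Type) (iP : AddCommGroup P) (jP : Module R P)
        (f : TensorProduct R C P →ₗ[R] M),
        Module.Projective R P ∧ Function.Surjective f ∧
          CpdLE R C n (LinearMap.ker f) inferInstance inferInstance

/-- `CidLE R C n M` : `M` has `C`-injective dimension at most `n`, i.e. there is an exact
sequence `0 → M → Hom(C,I⁰) → ⋯ → Hom(C,Iⁿ) → 0` with each `Iⁱ` injective. -/
def CidLE (R C : Type) [CommRing R] [AddCommGroup C] [Module R C] :
    ℕ → (M : Type) → (iM : AddCommGroup M) → (jM : Module R M) → Prop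
  | 0, M, iM, jM =>
      ∃ (I : Type) (iI : AddCommGroup I) (jI : Module R I),
        Module.Injective R I ∧ Nonempty (M ≃ₗ[R] (C →ₗ[R] I))
  | n+1, M, iM, jM =>
      ∃ (I : Type) (iI : AddCommGroup I) (jI : Module R I)
        (f : M →ₗ[R] (C →ₗ[R] I)),
        Module.Injective R I ∧ Function.Injective f ∧
          CidLE R C n ((C →ₗ[R] I) ⧸ LinearMap.range f) inferInstance inferInstance

/-- The depth of a module over a local ring: the supremum of lengths of `M`-regular
sequences contained in the maximal ideal. -/
noncomputable def rdepth (R : Type) [CommRing R] [IsLocalRing R]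
    (M : Type) [AddCommGroup M] [Module R M] : ℕ∞ :=
  sSup {n : ℕ∞ | ∃ rs : List R, (rs.length : ℕ∞) = n ∧
    (∀ r ∈ rs, r ∈ IsLocalRing.maximalIdeal R) ∧ RingTheory.Sequence.IsRegular M rs}

/-!
Let `k` be the residue field, `π : G → M` a finite free cover with kernel `Z`, and `φ : G → R` a
functional lifting a map from `M` onto a nonzero cyclic module. Then `φ Z ⊆ 𝔪`, while `φ e = 1` for
some `e`. The point is that `φ|_Z` induces zero on `Ext^{>0}(k, -)`: given `α ∈ Ext^j(k, R)` with
`j > 0` and `Ext^j(k, M) = 0`, the image of `α` under `e : R → G` then comes from `Ext^j(k, Z)`, so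
applying `φ` gives `α = 0`. For `j` above the injective dimension of `M` this shows
`Ext^j(k, R) = 0`, and prime filtrations with Nakayama's lemma then bound the injective dimension
of `R`.

To see that `φ|_Z` induces zero, let `P` be a projective resolution of `k`. For `z ∈ Z`,
multiplication by `φ z` kills `k`, so on `P` it is null-homotopic; over a free cover of `Z` the
homotopy can be chosen linear in `z`, and its failure to be linear in `z ∈ Z` itself is again such a
family, indexed by the next syzygy of `Z`. If `b : P_{m+1} → Z` is a cocycle, `φ ∘ b` is the partial
trace of the family `z ↦ φ z` composed with a lift of `b`. Cyclicity of the trace carries this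
partial trace, modulo coboundaries, along the finite free resolution of `Z`, which ends in zero.
-/

universe u v w

section LinearAlgebra

variable {R : Type*} [CommRing R]

lemma exists_comp_eq_of_range_le {P M N : Type*} [AddCommGroup P] [Module R P]
    [Module.Projective R P] [AddCommGroup M] [Module R M] [AddCommGroup N] [Module R N]
    (f : P →ₗ[R] N) (g : M →ₗ[R] N) (h : f.range ≤ g.range) : ∃ k : P →ₗ[R] M, g ∘ₗ k = f := by
  obtain ⟨k, hk⟩ := Module.projective_lifting_property g.rangeRestrict
    (f.codRestrict g.range fun x => h ⟨x, rfl⟩) g.surjective_rangeRestrict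
  exact ⟨k, by simpa [← LinearMap.comp_assoc] using congrArg (g.range.subtype ∘ₗ ·) hk⟩

lemma exists_chainHomotopy {X Y : ℕ → Type*} [∀ i, AddCommGroup (X i)] [∀ i, Module R (X i)]
    [∀ i, Module.Projective R (X i)] [∀ i, AddCommGroup (Y i)] [∀ i, Module R (Y i)]
    {dX : ∀ i, X (i + 1) →ₗ[R] X i} {dY : ∀ i, Y (i + 1) →ₗ[R] Y i}
    (hX : ∀ i, dX i ∘ₗ dX (i + 1) = 0) (hY : ∀ i, Function.Exact (dY (i + 1)) (dY i))
    {c : R} {θ : ∀ i, X i →ₗ[R] Y i} (hθ : ∀ i, dY i ∘ₗ θ (i + 1) = c • θ i ∘ₗ dX i)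
    (hθ₀ : (θ 0).range ≤ (dY 0).range) :
    ∃ h : ∀ i, X i →ₗ[R] Y (i + 1), dY 0 ∘ₗ h 0 = θ 0 ∧
      ∀ i, dY (i + 1) ∘ₗ h (i + 1) + c • h i ∘ₗ dX i = θ (i + 1) := by
  let S (i : ℕ) := {h : X i →ₗ[R] Y (i + 1) // dY i ∘ₗ h ∘ₗ dX i = θ i ∘ₗ dX i}
  have extend (i : ℕ) (h : S i) : ∃ h' : S (i + 1),
      dY (i + 1) ∘ₗ h'.1 + c • h.1 ∘ₗ dX i = θ (i + 1) := by
    have hcycle : dY i ∘ₗ (θ (i + 1) - c • h.1 ∘ₗ dX i) = 0 := by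
      rw [LinearMap.comp_sub, LinearMap.comp_smul, hθ, h.2, sub_self]
    obtain ⟨h', hh'⟩ := exists_comp_eq_of_range_le _ (dY (i + 1))
      ((LinearMap.range_le_ker_iff.2 hcycle).trans (hY i).linearMap_ker_eq.le)
    refine ⟨⟨h', ?_⟩, by rw [hh', sub_add_cancel]⟩
    rw [← LinearMap.comp_assoc, hh', LinearMap.sub_comp, LinearMap.smul_comp,
      LinearMap.comp_assoc, hX, LinearMap.comp_zero, smul_zero, sub_zero]
  obtain ⟨h₀, hh₀⟩ := exists_comp_eq_of_range_le (θ 0) (dY 0) hθ₀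
  choose next hnext using extend
  let h : ∀ i, S i := fun i => Nat.rec ⟨h₀, by rw [← LinearMap.comp_assoc, hh₀]⟩ next i
  exact ⟨fun i => (h i).1, hh₀, fun i => hnext i (h i)⟩

/-- The partial trace of a linear map `T : G ⊗ P → G`, contracting the two occurrences of `G`:
the functional sending `p` to the trace of the endomorphism `g ↦ T (g ⊗ p)` of `G`. It is the
junk value `0` when `G` is not finite free. -/
noncomputable def partialTrace {G P : Type*} [AddCommGroup G] [Module R G] [AddCommGroup P]
    [Module R P] : (G ⊗[R] P →ₗ[R] G) →ₗ[R] P →ₗ[R] R :=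
  (LinearMap.trace R G).compRight R ∘ₗ LinearMap.lflip.toLinearMap ∘ₗ
    TensorProduct.lcurry (.id R) G P G

section PartialTrace

variable {G G' P P' : Type*} [AddCommGroup G] [Module R G] [AddCommGroup G'] [Module R G']
  [AddCommGroup P] [Module R P] [AddCommGroup P'] [Module R P']

lemma partialTrace_apply (T : G ⊗[R] P →ₗ[R] G) (p : P) :
    partialTrace T p = LinearMap.trace R G (T ∘ₗ (TensorProduct.mk R G P).flip p) := rfl

lemma partialTrace_comp_lTensor (T : G ⊗[R] P →ₗ[R] G) (f : P' →ₗ[R] P) :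
    partialTrace (T ∘ₗ f.lTensor G) = partialTrace T ∘ₗ f := rfl

variable [Module.Free R G] [Module.Finite R G]

lemma partialTrace_comp_rTensor [Module.Free R G'] [Module.Finite R G']
    (T : G ⊗[R] P →ₗ[R] G') (f : G' →ₗ[R] G) :
    partialTrace (T ∘ₗ f.rTensor P) = partialTrace (f ∘ₗ T) :=
  LinearMap.ext fun p => LinearMap.trace_comp_comm' f (T ∘ₗ (TensorProduct.mk R G P).flip p)

lemma partialTrace_comp_lift_lsmul (f : P →ₗ[R] G) (φ : G →ₗ[R] R) :
    partialTrace (f ∘ₗ TensorProduct.lift (LinearMap.lsmul R P ∘ₗ φ)) = φ ∘ₗ f := by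
  ext p
  have hrank : (f ∘ₗ TensorProduct.lift (LinearMap.lsmul R P ∘ₗ φ)) ∘ₗ
      (TensorProduct.mk R G P).flip p = φ.smulRight (f p) := by
    ext g
    simp
  rw [partialTrace_apply, hrank, LinearMap.trace_smulRight, LinearMap.comp_apply]

end PartialTrace

end LinearAlgebra

section FiniteFreeResolution

/-- The module `Z` has a finite resolution by finite free modules. -/
inductive HasFiniteFreeResolution (R : Type u) [CommRing R] :
    (Z : Type v) → [AddCommGroup Z] → [Module R Z] → Prop
  | of_subsingleton (Z : Type v) [AddCommGroup Z] [Module R Z] [Subsingleton Z] :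
      HasFiniteFreeResolution R Z
  | of_surjective {G Z : Type v} [AddCommGroup G] [Module R G] [Module.Free R G]
      [Module.Finite R G] [AddCommGroup Z] [Module R Z] (π : G →ₗ[R] Z)
      (hπ : Function.Surjective π) (hker : HasFiniteFreeResolution R π.ker) :
      HasFiniteFreeResolution R Z

variable {R : Type u} [CommRing R] {P Q : ℕ → Type w}
  [∀ i, AddCommGroup (P i)] [∀ i, Module R (P i)]
  [∀ i, AddCommGroup (Q i)] [∀ i, Module R (Q i)]
  {dP : ∀ i, P (i + 1) →ₗ[R] P i} {dQ : ∀ i, Q (i + 1) →ₗ[R] Q i}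

lemma exists_linearFamily_homotopy [∀ i, Module.Projective R (P i)] {G Z : Type*}
    [AddCommGroup G] [Module R G] [Module.Projective R G] [AddCommGroup Z] [Module R Z]
    (hP : ∀ i, dP i ∘ₗ dP (i + 1) = 0) (hQ : ∀ i, Function.Exact (dQ (i + 1)) (dQ i))
    {c : R} {θ : ∀ i, Z ⊗[R] P i →ₗ[R] Q i}
    (hθ : ∀ i, dQ i ∘ₗ θ (i + 1) = c • θ i ∘ₗ (dP i).lTensor Z)
    (hθ₀ : (θ 0).range ≤ (dQ 0).range) (π : G →ₗ[R] Z) :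
    ∃ h : ∀ i, G ⊗[R] P i →ₗ[R] Q (i + 1), dQ 0 ∘ₗ h 0 = θ 0 ∘ₗ π.rTensor (P 0) ∧
      ∀ i, dQ (i + 1) ∘ₗ h (i + 1) + c • h i ∘ₗ (dP i).lTensor G =
        θ (i + 1) ∘ₗ π.rTensor (P (i + 1)) :=
  exists_chainHomotopy (X := fun i => G ⊗[R] P i) (θ := fun i => θ i ∘ₗ π.rTensor (P i))
    (fun i => by rw [← LinearMap.lTensor_comp, hP, LinearMap.lTensor_zero]) hQ
    (fun i => by
      rw [← LinearMap.comp_assoc, hθ, LinearMap.smul_comp, LinearMap.comp_assoc,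
        LinearMap.comp_assoc, LinearMap.lTensor_comp_rTensor, LinearMap.rTensor_comp_lTensor])
    ((LinearMap.range_comp_le_range _ _).trans hθ₀)

lemma comp_restrict_ker_of_homotopy {G Z : Type*} [AddCommGroup G] [Module R G]
    [AddCommGroup Z] [Module R Z] {c : R} {θ : ∀ i, Z ⊗[R] P i →ₗ[R] Q i} {π : G →ₗ[R] Z}
    {h : ∀ i, G ⊗[R] P i →ₗ[R] Q (i + 1)} (hh₀ : dQ 0 ∘ₗ h 0 = θ 0 ∘ₗ π.rTensor (P 0))
    (hh : ∀ i, dQ (i + 1) ∘ₗ h (i + 1) + c • h i ∘ₗ (dP i).lTensor G =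
      θ (i + 1) ∘ₗ π.rTensor (P (i + 1))) :
    dQ 0 ∘ₗ h 0 ∘ₗ π.ker.subtype.rTensor (P 0) = 0 ∧
      ∀ i, dQ (i + 1) ∘ₗ h (i + 1) ∘ₗ π.ker.subtype.rTensor (P (i + 1)) =
        -c • (h i ∘ₗ π.ker.subtype.rTensor (P i)) ∘ₗ (dP i).lTensor π.ker := by
  have hιπ (i : ℕ) : π.rTensor (P i) ∘ₗ π.ker.subtype.rTensor (P i) = 0 := by
    rw [← LinearMap.rTensor_comp, π.comp_ker_subtype, LinearMap.rTensor_zero]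
  refine ⟨by rw [← LinearMap.comp_assoc, hh₀, LinearMap.comp_assoc, hιπ, LinearMap.comp_zero],
    fun i => ?_⟩
  have := congrArg (· ∘ₗ π.ker.subtype.rTensor (P (i + 1))) (hh i)
  simp only [LinearMap.add_comp, LinearMap.smul_comp, LinearMap.comp_assoc, hιπ,
    LinearMap.comp_zero] at this
  rw [LinearMap.comp_assoc, LinearMap.rTensor_comp_lTensor, neg_smul,
    ← LinearMap.lTensor_comp_rTensor]
  exact eq_neg_of_add_eq_zero_left this

lemma partialTrace_comp_homotopy {A A' B B' G G' : Type*} [AddCommGroup A] [Module R A]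
    [AddCommGroup A'] [Module R A'] [AddCommGroup B] [Module R B] [AddCommGroup B'] [Module R B']
    [AddCommGroup G] [Module R G] [Module.Free R G] [Module.Finite R G]
    [AddCommGroup G'] [Module R G'] [Module.Free R G'] [Module.Finite R G']
    {d : A' →ₗ[R] A} {d' : B' →ₗ[R] B} {β : B →ₗ[R] G} {β' : B' →ₗ[R] G'} {f : G' →ₗ[R] G}
    (hβ : β ∘ₗ d' = f ∘ₗ β') (h : G ⊗[R] A →ₗ[R] B) (h' : G ⊗[R] A' →ₗ[R] B') (c : R) :
    partialTrace (β ∘ₗ (d' ∘ₗ h' + c • h ∘ₗ d.lTensor G)) =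
      partialTrace (β' ∘ₗ h' ∘ₗ f.rTensor A') + c • partialTrace (β ∘ₗ h) ∘ₗ d := by
  rw [LinearMap.comp_add, LinearMap.comp_smul, map_add, map_smul, ← LinearMap.comp_assoc, hβ,
    LinearMap.comp_assoc, ← partialTrace_comp_rTensor, ← LinearMap.comp_assoc,
    partialTrace_comp_lTensor, LinearMap.comp_assoc]

/- The induction replaces `θ` by homotopies indexed by the next syzygy, which commute with the
differentials only up to sign; the scalar `c` absorbs these signs. -/
lemma HasFiniteFreeResolution.exists_partialTrace_eq {Z : Type v} [AddCommGroup Z] [Module R Z]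
    (hZ : HasFiniteFreeResolution R Z) [∀ i, Module.Projective R (P i)]
    [∀ i, Module.Projective R (Q i)]
    (hP : ∀ i, dP i ∘ₗ dP (i + 1) = 0) (hQ : ∀ i, Function.Exact (dQ (i + 1)) (dQ i))
    {c : R} {θ : ∀ i, Z ⊗[R] P i →ₗ[R] Q i}
    (hθ : ∀ i, dQ i ∘ₗ θ (i + 1) = c • θ i ∘ₗ (dP i).lTensor Z)
    (hθ₀ : (θ 0).range ≤ (dQ 0).range) {m : ℕ} {b : Q (m + 1) →ₗ[R] Z}
    (hb : b ∘ₗ dQ (m + 1) = 0) :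
    ∃ (G : Type v) (_ : AddCommGroup G) (_ : Module R G) (_ : Module.Free R G)
      (_ : Module.Finite R G) (π : G →ₗ[R] Z) (β : Q (m + 1) →ₗ[R] G) (γ : P m →ₗ[R] R),
      π ∘ₗ β = b ∧ partialTrace (β ∘ₗ θ (m + 1) ∘ₗ π.rTensor (P (m + 1))) = γ ∘ₗ dP m := by
  induction hZ generalizing Q c with
  | of_subsingleton Z =>
    exact ⟨PUnit, inferInstance, inferInstance, inferInstance, inferInstance, 0, 0, 0,
      Subsingleton.elim _ _, by simp⟩
  | @of_surjective G Z _ _ _ _ _ _ π hπ _ ih =>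
    obtain ⟨h, hh₀, hh⟩ := exists_linearFamily_homotopy hP hQ hθ hθ₀ π
    obtain ⟨hκ₀, hκ⟩ := comp_restrict_ker_of_homotopy hh₀ hh
    obtain ⟨β, hβ⟩ := Module.projective_lifting_property π b hπ
    let b' : Q (m + 2) →ₗ[R] π.ker := (β ∘ₗ dQ (m + 1)).codRestrict π.ker
      (LinearMap.congr_fun (by rw [← LinearMap.comp_assoc, hβ, hb] : π ∘ₗ β ∘ₗ dQ (m + 1) = 0))
    have hb' : b' ∘ₗ dQ (m + 2) = 0 := LinearMap.ext fun q => Subtype.ext <|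
      (congrArg β ((hQ (m + 1)).apply_apply_eq_zero q)).trans (map_zero β)
    obtain ⟨G', _, _, _, _, π', β', γ, hβ', hγ⟩ := ih (Q := fun i => Q (i + 1))
      (θ := fun i => h i ∘ₗ π.ker.subtype.rTensor (P i)) (fun i => hQ (i + 1)) hκ
      ((LinearMap.range_le_ker_iff.2 hκ₀).trans (hQ 0).linearMap_ker_eq.le) hb'
    have hβd : β ∘ₗ dQ (m + 1) = (π.ker.subtype ∘ₗ π') ∘ₗ β' := by
      rw [LinearMap.comp_assoc, hβ']
      rfl
    refine ⟨G, _, _, inferInstance, inferInstance, π, β, γ + c • partialTrace (β ∘ₗ h m), hβ, ?_⟩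
    rw [← hh, partialTrace_comp_homotopy hβd, LinearMap.rTensor_comp, LinearMap.add_comp,
      LinearMap.smul_comp, ← hγ]
    rfl

namespace HasFiniteFreeResolution

lemma exists_functional_comp_eq {Z : Type v} [AddCommGroup Z] [Module R Z]
    (hZ : HasFiniteFreeResolution R Z) [∀ i, Module.Projective R (P i)]
    (hP : ∀ i, Function.Exact (dP (i + 1)) (dP i)) (φ : Z →ₗ[R] R)
    (hφ : ∀ z p, φ z • p ∈ (dP 0).range) {m : ℕ} {b : P (m + 1) →ₗ[R] Z}
    (hb : b ∘ₗ dP (m + 1) = 0) : ∃ γ : P m →ₗ[R] R, φ ∘ₗ b = γ ∘ₗ dP m := by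
  obtain ⟨G, _, _, _, _, π, β, γ, rfl, hγ⟩ := hZ.exists_partialTrace_eq (c := 1)
    (θ := fun i => TensorProduct.lift (LinearMap.lsmul R (P i) ∘ₗ φ))
    (fun i => (hP i).linearMap_comp_eq_zero) hP (fun i => by ext; simp)
    (by
      rw [LinearMap.range_le_iff_comap, eq_top_iff, ← TensorProduct.span_tmul_eq_top,
        Submodule.span_le]
      rintro _ ⟨z, p, rfl⟩
      exact hφ z p) hb
  refine ⟨γ, ?_⟩
  rw [← hγ, ← LinearMap.comp_assoc, ← partialTrace_comp_lift_lsmul]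
  congr 2
  ext
  rfl

lemma ext_comp_mk₀_eq_zero {N : ModuleCat.{u} R} {Z : Type u} [AddCommGroup Z] [Module R Z]
    (hZ : HasFiniteFreeResolution R Z) (φ : Z →ₗ[R] R) (hφ : ∀ (z : Z) (n : N), φ z • n = 0)
    {m : ℕ} (x : Abelian.Ext N (ModuleCat.of R Z) (m + 1)) :
    x.comp (Abelian.Ext.mk₀ (ModuleCat.ofHom φ)) (add_zero _) = 0 := by
  let P := ProjectiveResolution.of N
  have (i : ℕ) : Module.Projective R (P.complex.X i) :=
    (IsProjective.iff_projective _).mpr (P.projective i)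
  obtain ⟨b, hb, rfl⟩ := P.extMk_surjective x (m + 2) rfl
  rw [P.extMk_comp_mk₀, P.extMk_eq_zero_iff _ _ rfl _ m rfl]
  obtain ⟨γ, hγ⟩ := hZ.exists_functional_comp_eq (P := fun i => P.complex.X i)
    (dP := fun i => (P.complex.d (i + 1) i).hom)
    (fun i => (ShortComplex.ShortExact.moduleCat_exact_iff_function_exact _).1 (P.exact_succ i)) φ
    (fun z p => (ShortComplex.moduleCat_exact_iff _).1 P.exact₀ _
      ((map_smul (P.π.f 0).hom (φ z) p).trans (hφ z _)))
    (congrArg ModuleCat.Hom.hom hb)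
  exact ⟨ModuleCat.ofHom γ, ModuleCat.hom_ext hγ.symm⟩

lemma of_hasProjectiveDimensionLE [IsNoetherianRing R] [IsLocalRing R] {n : ℕ} {Z : Type u}
    [AddCommGroup Z] [Module R Z] [Module.Finite R Z]
    (hZ : HasProjectiveDimensionLE (ModuleCat.of R Z) n) : HasFiniteFreeResolution R Z := by
  induction n generalizing Z with
  | zero =>
    have : Module.Projective R Z :=
      (IsProjective.iff_projective Z).mpr (projective_iff_hasProjectiveDimensionLT_one.mpr hZ)
    have : Module.Free R Z := Module.free_of_flat_of_isLocalRing
    have : Subsingleton (LinearMap.id : Z →ₗ[R] Z).ker := by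
      rw [LinearMap.ker_id]
      infer_instance
    exact of_surjective LinearMap.id Function.surjective_id (of_subsingleton _)
  | succ n ih =>
    obtain ⟨b, π, hπ⟩ := Module.Finite.exists_fin' R Z
    have hproj := (IsProjective.iff_projective (R := R) (Fin b → R)).mp inferInstance
    exact of_surjective π hπ (ih
      (((LinearMap.shortExact_shortComplexKer hπ).hasProjectiveDimensionLT_X₃_iff n hproj).mp hZ))

end HasFiniteFreeResolution

end FiniteFreeResolution

section Bass

open Abelian

variable {R : Type u} [CommRing R]

lemma subsingleton_ext_of_forall_mem_support [IsNoetherianRing R] {X : ModuleCat.{u} R} {j : ℕ}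
    (N : Type u) [AddCommGroup N] [Module R N] [hN : Module.Finite R N]
    (h : ∀ p ∈ Module.support R N, Subsingleton (Ext (ModuleCat.of R (R ⧸ p.asIdeal)) X j)) :
    Subsingleton (Ext (ModuleCat.of R N) X j) := by
  induction hN using IsNoetherianRing.induction_on_isQuotientEquivQuotientPrime with
  | subsingleton N =>
    have := (ModuleCat.isZero_of_subsingleton (ModuleCat.of R N)).hasProjectiveDimensionLT_zero
    exact HasProjectiveDimensionLT.subsingleton _ 0 j j.zero_le X
  | quotient N p e =>
    have hp : p ∈ Module.support R N := by
      simp [e.support_eq, Module.support_of_algebra]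
    have := h p hp
    exact (((extFunctor j).mapIso e.toModuleIso.symm.op).app
      X).addCommGroupIsoToAddEquiv.toEquiv.subsingleton_congr.2 this
  | exact N₁ N₂ N₃ f g hf hg hfg ih₁ ih₃ =>
    rw [Module.support_of_exact hfg hf hg] at h
    have := ih₁ fun p hp => h p (Or.inl hp)
    have := ih₃ fun p hp => h p (Or.inr hp)
    have hS : (ModuleCat.shortComplexOfCompEqZero f g hfg.linearMap_comp_eq_zero).ShortExact :=
      ModuleCat.shortComplex_shortExact _ hfg hf hg
    refine subsingleton_of_forall_eq 0 fun x => ?_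
    obtain ⟨y, rfl⟩ := Ext.contravariant_sequence_exact₂ hS X x
      (Subsingleton.elim (α := Ext (ModuleCat.of R N₁) X j) _ _)
    rw [Subsingleton.elim (α := Ext (ModuleCat.of R N₃) X j) y 0, Ext.comp_zero]

lemma subsingleton_ext_of_quotSMulTop [IsNoetherianRing R] [IsLocalRing R]
    {N X : ModuleCat.{u} R} [Module.Finite R N] [Module.Finite R X] {r : R}
    (hr : r ∈ IsLocalRing.maximalIdeal R) (hrN : IsSMulRegular N r) {j : ℕ}
    [Subsingleton (Ext (ModuleCat.of R (QuotSMulTop r N)) X (j + 1))] :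
    Subsingleton (Ext N X j) := by
  have hsurj (y : Ext N X j) : ∃ z, r • z = y := by
    obtain ⟨z, hz⟩ : ∃ z : Ext N X j, (Ext.mk₀ (r • 𝟙 N)).comp z (zero_add j) = y :=
      Ext.contravariant_sequence_exact₁ hrN.smulShortComplex_shortExact X y (add_comm 1 j)
        (Subsingleton.elim (α := Ext (ModuleCat.of R (QuotSMulTop r N)) X (j + 1)) _ _)
    exact ⟨z, by rw [← hz, Ext.mk₀_smul, Ext.smul_comp, Ext.mk₀_id_comp]⟩
  have htop : (⊤ : Submodule R (Ext N X j)) = ⊥ := by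
    refine Submodule.eq_bot_of_le_smul_of_le_jacobson_bot (IsLocalRing.maximalIdeal R) _
      Module.Finite.fg_top (fun y _ => ?_) (IsLocalRing.maximalIdeal_le_jacobson _)
    obtain ⟨z, rfl⟩ := hsurj y
    exact Submodule.smul_mem_smul hr trivial
  exact (Submodule.subsingleton_iff R).mp (subsingleton_of_bot_eq_top htop.symm)

lemma subsingleton_ext_quotient_prime_of_residueField [IsNoetherianRing R] [IsLocalRing R]
    {X : ModuleCat.{u} R} [Module.Finite R X] {s : ℕ}
    (hX : ∀ j, s < j →
      Subsingleton (Ext (ModuleCat.of R (R ⧸ IsLocalRing.maximalIdeal R)) X j))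
    (p : Ideal R) [hp : p.IsPrime] {j : ℕ} (hj : s < j) :
    Subsingleton (Ext (ModuleCat.of R (R ⧸ p)) X j) := by
  induction p using WellFoundedGT.induction generalizing j hp with
  | ind p ih =>
    obtain rfl | hlt := (IsLocalRing.le_maximalIdeal hp.ne_top).eq_or_lt
    · exact hX j hj
    · obtain ⟨r, hr, hrp⟩ := SetLike.exists_of_lt hlt
      have hreg : IsSMulRegular (R ⧸ p) r := (isSMulRegular_quotient_iff_mem_of_smul_mem p r).2
        fun x hx => (hp.mem_or_mem hx).resolve_left hrp
      have : Subsingleton (Ext (ModuleCat.of R (QuotSMulTop r (R ⧸ p))) X (j + 1)) := by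
        refine subsingleton_ext_of_forall_mem_support _ fun q hq => ?_
        rw [Module.support_quotSMulTop, Module.support_of_algebra] at hq
        have hpq : p ≤ q.asIdeal := by
          simpa using hq.1
        have hrq : r ∈ q.asIdeal := by simpa using hq.2
        exact ih q.asIdeal (lt_of_le_of_ne hpq (ne_of_mem_of_not_mem' hrq hrp).symm) (by lia)
      exact subsingleton_ext_of_quotSMulTop (N := ModuleCat.of R (R ⧸ p)) hr hreg

lemma hasInjectiveDimensionLE_of_forall_ideal {X : ModuleCat.{u} R} {n : ℕ}
    (h : ∀ J : Ideal R, Subsingleton (Ext (ModuleCat.of R (R ⧸ J)) X (n + 1))) :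
    HasInjectiveDimensionLE X n := by
  induction n generalizing X with
  | zero =>
    refine injective_iff_hasInjectiveDimensionLT_one.1
      ((Module.injective_iff_injective_object R X).1 (Module.Baer.injective fun J g => ?_))
    have hS := ModuleCat.shortComplex_shortExact
      (ModuleCat.shortComplexOfCompEqZero J.subtype (Submodule.mkQ J)
        (LinearMap.exact_subtype_mkQ J).linearMap_comp_eq_zero)
      (LinearMap.exact_subtype_mkQ J) J.subtype_injective (Submodule.mkQ_surjective J)
    obtain ⟨z, hz⟩ := Ext.contravariant_sequence_exact₁ hS X
      (Ext.mk₀ (ModuleCat.ofHom g)) (add_zero 1) (Subsingleton.elim (h := h J) _ _)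
    obtain ⟨g', rfl⟩ := (Ext.mk₀_bijective _ _).2 z
    rw [Ext.mk₀_comp_mk₀] at hz
    have hg' := congrArg ModuleCat.Hom.hom ((Ext.mk₀_bijective _ _).1 hz)
    exact ⟨g'.hom, fun x hx => LinearMap.congr_fun hg' ⟨x, hx⟩⟩
  | succ n ih =>
    obtain ⟨I, _, f, _⟩ := EnoughInjectives.presentation X
    have hS : (ShortComplex.mk f _ (Limits.cokernel.condition f)).ShortExact :=
      { exact := ShortComplex.exact_cokernel f }
    refine (hS.hasInjectiveDimensionLT_X₃_iff n ‹_›).1 (ih fun J => ?_)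
    refine subsingleton_of_forall_eq 0 fun x => ?_
    obtain ⟨y, rfl⟩ := Ext.covariant_sequence_exact₃ _ hS x rfl
      (Subsingleton.elim (h := h J) _ _)
    rw [Ext.eq_zero_of_injective (I := I) y, Ext.zero_comp]

theorem hasInjectiveDimensionLE_of_residueField [IsNoetherianRing R] [IsLocalRing R]
    {X : ModuleCat.{u} R} [Module.Finite R X] {s : ℕ}
    (hX : ∀ j, s < j →
      Subsingleton (Ext (ModuleCat.of R (R ⧸ IsLocalRing.maximalIdeal R)) X j)) :
    HasInjectiveDimensionLE X s :=
  hasInjectiveDimensionLE_of_forall_ideal fun J =>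
    subsingleton_ext_of_forall_mem_support (R ⧸ J) fun p _ =>
      subsingleton_ext_quotient_prime_of_residueField hX p.asIdeal s.lt_succ_self

end Bass

section FiniteProjectiveDimension

open Abelian

variable {R : Type u} [CommRing R] [IsLocalRing R]

lemma exists_functional_map_ker_le_maximalIdeal {M G : Type*} [AddCommGroup M] [Module R M]
    [Module.Finite R M] [Nontrivial M] [AddCommGroup G] [Module R G] [Module.Projective R G]
    {π : G →ₗ[R] M} (hπ : Function.Surjective π) :
    ∃ (φ : G →ₗ[R] R) (e : G), φ e = 1 ∧ π.ker.map φ ≤ IsLocalRing.maximalIdeal R := by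
  obtain ⟨I, χ, hI, hχ⟩ := Module.exists_surjective_quotient_of_finite R M
  obtain ⟨φ, hφ⟩ := Module.projective_lifting_property I.mkQ (χ ∘ₗ π) I.mkQ_surjective
  replace hφ (g : G) : Ideal.Quotient.mk I (φ g) = χ (π g) := LinearMap.congr_fun hφ g
  obtain ⟨e, he⟩ := (hχ.comp hπ) 1
  have hunit : IsUnit (φ e) := by
    have hsub : 1 - φ e ∈ IsLocalRing.maximalIdeal R :=
      IsLocalRing.le_maximalIdeal hI (Ideal.Quotient.eq.1 ((hφ e).trans he).symm)
    simpa using IsLocalRing.isUnit_one_sub_self_of_mem_nonunits _ hsub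
  obtain ⟨u, hu⟩ := hunit
  refine ⟨φ, (↑u⁻¹ : R) • e, by simp [← hu], ?_⟩
  rintro _ ⟨z, hz, rfl⟩
  refine IsLocalRing.le_maximalIdeal hI (Ideal.Quotient.eq_zero_iff_mem.1 ?_)
  rw [hφ, LinearMap.mem_ker.1 hz, map_zero]

lemma HasFiniteFreeResolution.subsingleton_ext_ring {N : ModuleCat.{u} R}
    (hN : IsLocalRing.maximalIdeal R ≤ Module.annihilator R N) {M : Type u} [AddCommGroup M]
    [Module R M] [Nontrivial M] (hM : HasFiniteFreeResolution R M) {m : ℕ}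
    [Subsingleton (Ext N (ModuleCat.of R M) (m + 1))] :
    Subsingleton (Ext N (ModuleCat.of R R) (m + 1)) := by
  obtain _ | ⟨π, hπ, hZ⟩ := hM
  · exact (not_subsingleton M ‹_›).elim
  rename_i G _ _ _ _
  have := Module.Finite.of_surjective π hπ
  obtain ⟨φ, e, he, hφ⟩ := exists_functional_map_ker_le_maximalIdeal hπ
  refine subsingleton_of_forall_eq 0 fun α => ?_
  let ε : ModuleCat.of R R ⟶ ModuleCat.of R G :=
    ModuleCat.ofHom (LinearMap.toSpanSingleton R _ e)
  have hεφ : ε ≫ ModuleCat.ofHom φ = 𝟙 _ := by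
    ext
    simp [ε, he]
  obtain ⟨z, hz⟩ : ∃ z : Ext N (ModuleCat.of R π.ker) (m + 1),
      z.comp (Ext.mk₀ (ModuleCat.ofHom π.ker.subtype)) (add_zero _) =
        α.comp (Ext.mk₀ ε) (add_zero _) :=
    Ext.covariant_sequence_exact₂ N (LinearMap.shortExact_shortComplexKer hπ)
      (α.comp (Ext.mk₀ ε) (add_zero _))
      (Subsingleton.elim (α := Ext N (ModuleCat.of R M) (m + 1)) _ _)
  calc α = (α.comp (Ext.mk₀ ε) (add_zero _)).comp (Ext.mk₀ (ModuleCat.ofHom φ)) (add_zero _) := by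
        rw [Ext.comp_assoc_of_third_deg_zero, Ext.mk₀_comp_mk₀, hεφ, Ext.comp_mk₀_id]
    _ = z.comp (Ext.mk₀ (ModuleCat.ofHom (φ ∘ₗ π.ker.subtype))) (add_zero _) := by
        rw [← hz, Ext.comp_assoc_of_third_deg_zero, Ext.mk₀_comp_mk₀, ModuleCat.ofHom_comp]
    _ = 0 := hZ.ext_comp_mk₀_eq_zero _
        (fun z y => Module.mem_annihilator.1 (hN (hφ ⟨z, z.2, rfl⟩)) y) z

theorem foxby_general [IsNoetherianRing R] {M : Type u} [AddCommGroup M] [Module R M]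
    [Module.Finite R M] [Nontrivial M] {n s : ℕ}
    (hpd : HasProjectiveDimensionLE (ModuleCat.of R M) n)
    (hid : HasInjectiveDimensionLE (ModuleCat.of R M) s) :
    HasInjectiveDimensionLE (ModuleCat.of R R) s := by
  refine hasInjectiveDimensionLE_of_residueField fun j hj => ?_
  obtain ⟨m, rfl⟩ : ∃ m, j = m + 1 := Nat.exists_eq_add_one_of_ne_zero (Nat.ne_zero_of_lt hj)
  have := HasInjectiveDimensionLT.subsingleton (ModuleCat.of R M) (s + 1) (m + 1) hj
    (ModuleCat.of R (R ⧸ IsLocalRing.maximalIdeal R))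
  exact (HasFiniteFreeResolution.of_hasProjectiveDimensionLE hpd).subsingleton_ext_ring
    (Ideal.annihilator_quotient (I := IsLocalRing.maximalIdeal R)).ge

end FiniteProjectiveDimension

section Dimensions

lemma shortExact_mkQ_range {R : Type u} [CommRing R] {A B : Type v} [AddCommGroup A] [Module R A]
    [AddCommGroup B] [Module R B] {f : A →ₗ[R] B} (hf : Function.Injective f) :
    (ModuleCat.shortComplexOfCompEqZero f f.range.mkQ
      f.exact_map_mkQ_range.linearMap_comp_eq_zero).ShortExact :=
  ModuleCat.shortComplex_shortExact _ f.exact_map_mkQ_range hf f.range.mkQ_surjective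

variable {R : Type} [CommRing R] {n : ℕ} {M : Type} {iM : AddCommGroup M} {jM : Module R M}

lemma pdLE.hasProjectiveDimensionLE (h : pdLE R n M iM jM) :
    HasProjectiveDimensionLE (ModuleCat.of R M) n := by
  induction n generalizing M with
  | zero =>
    exact projective_iff_hasProjectiveDimensionLT_one.1 ((IsProjective.iff_projective M).1 h)
  | succ n ih =>
    obtain ⟨P, _, _, f, hP, hf, hK⟩ := h
    exact ((LinearMap.shortExact_shortComplexKer hf).hasProjectiveDimensionLT_X₃_iff n
      ((IsProjective.iff_projective P).1 hP)).2 (ih hK)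

lemma idLE_iff_hasInjectiveDimensionLE :
    idLE R n M iM jM ↔ HasInjectiveDimensionLE (ModuleCat.of R M) n := by
  induction n generalizing M with
  | zero =>
    exact (Module.injective_iff_injective_object R M).trans
      injective_iff_hasInjectiveDimensionLT_one
  | succ n ih =>
    constructor
    · rintro ⟨I, _, _, f, hI, hf, hC⟩
      exact ((shortExact_mkQ_range hf).hasInjectiveDimensionLT_X₃_iff n
        ((Module.injective_iff_injective_object R I).1 hI)).1 (ih.1 hC)
    · intro h
      obtain ⟨I, hI, f, _⟩ := EnoughInjectives.presentation (ModuleCat.of R M)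
      have hf : Function.Injective f.hom := (ModuleCat.mono_iff_injective f).1 ‹_›
      exact ⟨I, inferInstance, inferInstance, f.hom,
        Module.injective_module_of_injective_object R I, hf,
        ih.2 (((shortExact_mkQ_range hf).hasInjectiveDimensionLT_X₃_iff n hI).2 h)⟩

end Dimensions

/-- **Foxby's theorem.** A commutative noetherian local ring admitting a nonzero finitely
generated module of finite projective dimension and finite injective dimension is Gorenstein. -/
theorem foxby (R : Type) [CommRing R] [IsNoetherianRing R] [IsLocalRing R]
    (M : Type) [AddCommGroup M] [Module R M] [Module.Finite R M] [Nontrivial M]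
    (hpd : ∃ n : ℕ, pdLE R n M inferInstance inferInstance)
    (hid : ∃ n : ℕ, idLE R n M inferInstance inferInstance) :
    IsGorensteinRing R := by
  obtain ⟨n, hpd⟩ := hpd
  obtain ⟨s, hid⟩ := hid
  exact ⟨s, idLE_iff_hasInjectiveDimensionLE.2
    (foxby_general hpd.hasProjectiveDimensionLE (idLE_iff_hasInjectiveDimensionLE.1 hid))⟩
end

section
/- Let R be a commutative noetherian local ring, C a semidualizing R-module, and M a finitely generated R-module of finite C-projective dimension. Then Hom_R(C, M) is a finitely generated R-module of finite projective dimension, and M ≅ C ⊗_R Hom_R(C,M); moreover if M is nonzero then Hom_R(C,M) is nonzero. -/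
/-!
Since `C` has a resolution by finite free modules, a class in `Extⁱ(C, C^(ι))` involves only
finitely many of the coordinates; hence `Extⁱ(C, C ⊗ P) = 0` for `P` projective and `i > 0`, and,
by dimension shifting along `0 → K → C ⊗ P → M → 0`, also `Extⁱ(C, M) = 0` whenever `M` has finite
`C`-projective dimension. So `Hom(C, -)` keeps such a sequence exact and, as
`Hom(C, C ⊗ P) ≅ P`, turns a resolution of `M` by modules `C ⊗ Pᵢ` into a projective resolution of
`Hom(C, M)`. That the evaluation map of `M` is bijective follows by induction from the five lemma,
applied to the sequence above and its image under `C ⊗ Hom(C, -)`.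
-/

open CategoryTheory TensorProduct

universe w v u

section AbelianExt

open Limits

variable {A : Type u} [Category.{v} A] [Abelian A]

lemma subsingleton_abelianExt_succ_of_subsingleton_ext (k : Type*) [Ring k] [Linear k A]
    [EnoughProjectives A] [HasExt.{w} A] {X Y : A} (n : ℕ)
    [Subsingleton (((Ext k A (n + 1)).obj (Opposite.op X)).obj Y)] :
    Subsingleton (Abelian.Ext.{w} X Y (n + 1)) := by
  let P := ProjectiveResolution.of X
  have hP : IsZero ((P.complex.linearYonedaObj k Y).homology (n + 1)) :=
    (ModuleCat.isZero_of_subsingleton _).of_iso (P.isoExt (n + 1) Y).symm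
  rw [← HomologicalComplex.exactAt_iff_isZero_homology,
    HomologicalComplex.exactAt_iff' _ n (n + 1) (n + 2) (by simp) (by simp),
    ShortComplex.moduleCat_exact_iff] at hP
  refine subsingleton_of_forall_eq 0 fun α => ?_
  obtain ⟨f, hf, rfl⟩ := P.extMk_surjective α (n + 2) rfl
  exact (P.extMk_eq_zero_iff f (n + 2) rfl hf n rfl).2 (hP f hf)

variable [HasExt.{w} A]

lemma subsingleton_abelianExt_of_retract {X Y Z : A} (h : Retract Y Z) (n : ℕ)
    [Subsingleton (Abelian.Ext.{w} X Z n)] : Subsingleton (Abelian.Ext.{w} X Y n) := by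
  refine subsingleton_of_forall_eq 0 fun α => ?_
  calc α = (α.comp (.mk₀ h.i) (add_zero n)).comp (.mk₀ h.r) (add_zero n) := by simp
    _ = 0 := by rw [Subsingleton.elim (α.comp _ _) 0, Abelian.Ext.zero_comp]

lemma subsingleton_abelianExt_X₃ {S : ShortComplex A} (hS : S.ShortExact) (X : A) (n : ℕ)
    [Subsingleton (Abelian.Ext.{w} X S.X₂ n)] [Subsingleton (Abelian.Ext.{w} X S.X₁ (n + 1))] :
    Subsingleton (Abelian.Ext.{w} X S.X₃ n) := by
  refine subsingleton_of_forall_eq 0 fun α => ?_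
  obtain ⟨β, rfl⟩ := Abelian.Ext.covariant_sequence_exact₃ X hS α rfl (Subsingleton.elim _ _)
  rw [Subsingleton.elim β 0, Abelian.Ext.zero_comp]

end AbelianExt

section ModuleExt

lemma exists_finset_sum_lsingle_comp_lapply_comp_eq {R K N ι : Type*} [Ring R] [AddCommGroup K]
    [Module R K] [Module.Finite R K] [AddCommGroup N] [Module R N] (f : K →ₗ[R] ι →₀ N) :
    ∃ s : Finset ι, (∑ j ∈ s, Finsupp.lsingle j ∘ₗ Finsupp.lapply j) ∘ₗ f = f := by
  classical
  obtain ⟨g, rfl⟩ := (LinearMap.finsuppLinearMap_bijective_of_moduleFinite R K N ι ℕ).2 f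
  refine ⟨g.support, LinearMap.ext fun x => Finsupp.ext fun j => ?_⟩
  by_cases hj : g j = 0 <;> simp [Finsupp.finsetSum_apply, Finsupp.single_apply, hj]

variable {R : Type u} [CommRing R] [Small.{v} R]

lemma compRight_surjective_of_subsingleton_abelianExt_one {M N X : Type v} [AddCommGroup M]
    [Module R M] [AddCommGroup N] [Module R N] [AddCommGroup X] [Module R X] {f : N →ₗ[R] M}
    (hf : Function.Surjective f)
    [Subsingleton (Abelian.Ext (ModuleCat.of R X) (ModuleCat.of R (LinearMap.ker f)) 1)] :
    Function.Surjective (f.compRight R : (X →ₗ[R] N) →ₗ[R] (X →ₗ[R] M)) := by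
  intro g
  obtain ⟨β, hβ⟩ := Abelian.Ext.covariant_sequence_exact₃ (ModuleCat.of R X)
    (LinearMap.shortExact_shortComplexKer hf) (.mk₀ (ModuleCat.ofHom g)) (zero_add 1)
    (Subsingleton.elim (α := Abelian.Ext _ (ModuleCat.of R (LinearMap.ker f)) 1) _ _)
  obtain ⟨g', rfl⟩ := (Abelian.Ext.mk₀_bijective _ _).2 β
  rw [Abelian.Ext.mk₀_comp_mk₀] at hβ
  exact ⟨g'.hom, congrArg ModuleCat.Hom.hom ((Abelian.Ext.mk₀_bijective _ _).1 hβ)⟩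

variable [IsNoetherianRing R] {N : Type v} [AddCommGroup N] [Module R N] {ι : Type v}

-- Every class in positive degree is a Yoneda product with the class of `0 → K' → F → K → 0`, where
-- `F` is finite free; so the finitely many coordinates of a map `K' → N^(ι)` suffice.
lemma exists_finset_abelianExt_comp_sum_eq (K : ModuleCat.{v} R) [Module.Finite R K] {n : ℕ}
    (α : Abelian.Ext K (ModuleCat.of R (ι →₀ N)) n) :
    ∃ s : Finset ι, α.comp (.mk₀ (ModuleCat.ofHom
      (∑ j ∈ s, Finsupp.lsingle j ∘ₗ Finsupp.lapply j))) (add_zero n) = α := by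
  induction n generalizing K with
  | zero =>
    obtain ⟨f, rfl⟩ := (Abelian.Ext.mk₀_bijective _ _).2 α
    obtain ⟨s, hs⟩ := exists_finset_sum_lsingle_comp_lapply_comp_eq f.hom
    refine ⟨s, ?_⟩
    rw [Abelian.Ext.mk₀_comp_mk₀]
    exact congrArg Abelian.Ext.mk₀ (ModuleCat.hom_ext hs)
  | succ n ih =>
    obtain ⟨F, _, _, _, _, p, hp⟩ := Module.exists_finite_presentation R K
    have hS := LinearMap.shortExact_shortComplexKer hp
    obtain ⟨β, rfl⟩ := precomp_extClass_surjective_of_projective_X₂ _ hS n α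
    obtain ⟨s, hs⟩ := ih _ β
    refine ⟨s, ?_⟩
    change (hS.extClass.comp β (add_comm 1 n)).comp _ _ = hS.extClass.comp β (add_comm 1 n)
    rw [Abelian.Ext.comp_assoc_of_third_deg_zero, hs]

lemma subsingleton_abelianExt_finsupp (K : ModuleCat.{v} R) [Module.Finite R K] (n : ℕ)
    [Subsingleton (Abelian.Ext K (ModuleCat.of R N) n)] :
    Subsingleton (Abelian.Ext K (ModuleCat.of R (ι →₀ N)) n) := by
  refine subsingleton_of_forall_eq 0 fun α => ?_
  obtain ⟨s, hs⟩ := exists_finset_abelianExt_comp_sum_eq K α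
  have hcomp (j : ι) : α.comp (.mk₀ (ModuleCat.ofHom
      (Finsupp.lsingle j ∘ₗ Finsupp.lapply j : (ι →₀ N) →ₗ[R] ι →₀ N))) (add_zero n) = 0 := by
    rw [ModuleCat.ofHom_comp, ← Abelian.Ext.mk₀_comp_mk₀,
      ← Abelian.Ext.comp_assoc_of_third_deg_zero,
      Subsingleton.elim (α.comp (.mk₀ (ModuleCat.ofHom (Finsupp.lapply j))) _) 0,
      Abelian.Ext.zero_comp]
  let postcomp : ((ι →₀ N) →ₗ[R] ι →₀ N) →+ Abelian.Ext K (ModuleCat.of R (ι →₀ N)) n :=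
    { toFun := fun f => α.comp (.mk₀ (ModuleCat.ofHom f)) (add_zero n)
      map_zero' := by simp
      map_add' := fun f g => by simp [ModuleCat.ofHom_add, Abelian.Ext.mk₀_add] }
  calc α = postcomp (∑ j ∈ s, Finsupp.lsingle j ∘ₗ Finsupp.lapply j) := hs.symm
    _ = ∑ j ∈ s, postcomp (Finsupp.lsingle j ∘ₗ Finsupp.lapply j) := map_sum postcomp _ _
    _ = 0 := Finset.sum_eq_zero fun j _ => hcomp j

lemma subsingleton_abelianExt_tensorProduct_of_projective (K : ModuleCat.{v} R)
    [Module.Finite R K] (P : Type v) [AddCommGroup P] [Module R P] [Module.Projective R P] (n : ℕ)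
    [Subsingleton (Abelian.Ext K (ModuleCat.of R N) n)] :
    Subsingleton (Abelian.Ext K (ModuleCat.of R (N ⊗[R] P)) n) := by
  classical
  obtain ⟨s, hs⟩ := Module.projective_def'.1 ‹Module.Projective R P›
  let e := TensorProduct.finsuppScalarRight R R N P
  let r : Retract (ModuleCat.of R (N ⊗[R] P)) (ModuleCat.of R (P →₀ N)) :=
    { i := ModuleCat.ofHom (e.toLinearMap ∘ₗ s.lTensor N)
      r := ModuleCat.ofHom ((Finsupp.linearCombination R id).lTensor N ∘ₗ e.symm.toLinearMap)
      retract := by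
        ext c p
        simpa using congrArg (c ⊗ₜ[R] ·) (LinearMap.congr_fun hs p) }
  have := subsingleton_abelianExt_finsupp (N := N) (ι := P) K n
  exact subsingleton_abelianExt_of_retract r n

end ModuleExt

section TensorHom

variable (R C M : Type*) {N P Q ι : Type*} [CommRing R] [AddCommGroup C] [Module R C]
  [AddCommGroup M] [Module R M] [AddCommGroup N] [Module R N] [AddCommGroup P] [Module R P]
  [AddCommGroup Q] [Module R Q]

/-- The unit `M → Hom(C, C ⊗ M)` of the tensor-hom adjunction. -/
noncomputable def tensorHomUnit : M →ₗ[R] C →ₗ[R] C ⊗[R] M :=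
  (TensorProduct.mk R C M).flip

/-- The counit `C ⊗ Hom(C, M) → M` of the tensor-hom adjunction, that is, the evaluation map. -/
noncomputable def tensorHomCounit : C ⊗[R] (C →ₗ[R] M) →ₗ[R] M :=
  TensorProduct.lift LinearMap.id.flip

variable {R C M}

@[simp]
lemma tensorHomUnit_apply (m : M) (c : C) : tensorHomUnit R C M m c = c ⊗ₜ m := rfl

@[simp]
lemma tensorHomCounit_tmul (c : C) (g : C →ₗ[R] M) : tensorHomCounit R C M (c ⊗ₜ g) = g c := rfl

lemma tensorHomUnit_comp (f : P →ₗ[R] Q) :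
    tensorHomUnit R C Q ∘ₗ f = (f.lTensor C).compRight R ∘ₗ tensorHomUnit R C P := by
  ext
  simp

lemma tensorHomCounit_comp_lTensor_compRight (f : N →ₗ[R] M) :
    tensorHomCounit R C M ∘ₗ (f.compRight R).lTensor C = f ∘ₗ tensorHomCounit R C N := by
  ext
  simp

lemma tensorHomCounit_comp_lTensor_tensorHomUnit :
    tensorHomCounit R C (C ⊗[R] M) ∘ₗ (tensorHomUnit R C M).lTensor C = LinearMap.id := by
  ext
  simp

lemma bijective_tensorHomUnit_of_comp_eq_id {f : P →ₗ[R] Q} {g : Q →ₗ[R] P}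
    (hgf : g ∘ₗ f = LinearMap.id) (hQ : Function.Bijective (tensorHomUnit R C Q)) :
    Function.Bijective (tensorHomUnit R C P) where
  left := .of_comp (f := (f.lTensor C).compRight R) <| by
    rw [← LinearMap.coe_comp, ← tensorHomUnit_comp]
    exact hQ.1.comp (LinearMap.injective_of_comp_eq_id f g hgf)
  right := .of_comp (g := g) <| by
    rw [← LinearMap.coe_comp, tensorHomUnit_comp, LinearMap.coe_comp]
    refine (LinearMap.surjective_of_comp_eq_id ((f.lTensor C).compRight R) _ ?_).comp hQ.2
    ext φ c
    simp [← LinearMap.lTensor_comp_apply, hgf]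

lemma bijective_tensorHomUnit_finsupp [Module.Finite R C]
    (hC : Function.Bijective (LinearMap.lsmul R C)) :
    Function.Bijective (tensorHomUnit R C (ι →₀ R)) := by
  classical
  let e := TensorProduct.finsuppScalarRight R R C ι
  have h : e.toLinearMap.compRight R ∘ₗ tensorHomUnit R C (ι →₀ R) =
      LinearMap.finsuppLinearMap R ∘ₗ Finsupp.mapRange.linearMap (LinearMap.lsmul R C) := by
    ext i c j
    by_cases hij : i = j <;> simp [e, hij]
  have he : Function.Bijective (e.toLinearMap.compRight R : (C →ₗ[R] _) →ₗ[R] C →ₗ[R] _) :=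
    (e.congrRight : (C →ₗ[R] _) ≃ₗ[R] C →ₗ[R] _).bijective
  rw [← Function.Bijective.of_comp_iff' he, ← LinearMap.coe_comp, h]
  exact (LinearMap.finsuppLinearMap_bijective_of_moduleFinite R C C ι R).comp
    (Finsupp.mapRange_bijective _ (map_zero _) hC)

lemma bijective_tensorHomUnit_of_projective [Module.Finite R C] [Module.Projective R P]
    (hC : Function.Bijective (LinearMap.lsmul R C)) :
    Function.Bijective (tensorHomUnit R C P) := by
  obtain ⟨s, hs⟩ := Module.projective_def'.1 ‹Module.Projective R P›
  exact bijective_tensorHomUnit_of_comp_eq_id hs (bijective_tensorHomUnit_finsupp hC)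

lemma bijective_tensorHomCounit_tensorProduct (hP : Function.Bijective (tensorHomUnit R C P)) :
    Function.Bijective (tensorHomCounit R C (C ⊗[R] P)) := by
  let e := (LinearEquiv.ofBijective _ hP).lTensor C
  rw [← Function.Bijective.of_comp_iff _ e.bijective]
  convert Function.bijective_id
  exact congrArg DFunLike.coe tensorHomCounit_comp_lTensor_tensorHomUnit

lemma bijective_tensorHomCounit_of_equiv (e : N ≃ₗ[R] M)
    (hN : Function.Bijective (tensorHomCounit R C N)) :
    Function.Bijective (tensorHomCounit R C M) := by
  let e' := (e.congrRight : (C →ₗ[R] N) ≃ₗ[R] (C →ₗ[R] M)).lTensor C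
  rw [← Function.Bijective.of_comp_iff _ e'.bijective]
  have h : tensorHomCounit R C M ∘ e' = e ∘ tensorHomCounit R C N :=
    congrArg DFunLike.coe (tensorHomCounit_comp_lTensor_compRight e.toLinearMap)
  rw [h]
  exact e.bijective.comp hN

lemma exact_compRight_ker_subtype (f : N →ₗ[R] M) :
    Function.Exact ((LinearMap.ker f).subtype.compRight R : (C →ₗ[R] LinearMap.ker f) →ₗ[R] _)
      (f.compRight R) := by
  refine fun g => ⟨fun hg => ⟨g.codRestrict _ fun c => LinearMap.congr_fun hg c, rfl⟩, ?_⟩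
  rintro ⟨g, rfl⟩
  exact LinearMap.ext fun c => (g c).2

variable (C) in
/-- Left exactness of `Hom(C, -)`, in the form of an isomorphism of kernels. -/
noncomputable def homKerEquiv (f : N →ₗ[R] M) :
    (C →ₗ[R] LinearMap.ker f) ≃ₗ[R] LinearMap.ker (f.compRight R : (C →ₗ[R] N) →ₗ[R] _) :=
  (LinearEquiv.ofInjective ((LinearMap.ker f).subtype.compRight R)
    fun _ _ h => LinearMap.ext fun c => Subtype.ext (LinearMap.congr_fun h c)).trans
    (LinearEquiv.ofEq _ _ (exact_compRight_ker_subtype f).linearMap_ker_eq.symm)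

lemma bijective_tensorHomCounit_of_surjective {f : N →ₗ[R] M} (hf : Function.Surjective f)
    (hfC : Function.Surjective (f.compRight R : (C →ₗ[R] N) →ₗ[R] (C →ₗ[R] M)))
    (hN : Function.Bijective (tensorHomCounit R C N))
    (hker : Function.Surjective (tensorHomCounit R C (LinearMap.ker f))) :
    Function.Bijective (tensorHomCounit R C M) :=
  LinearMap.bijective_of_surjective_of_bijective_of_right_exact
    (((LinearMap.ker f).subtype.compRight R).lTensor C) ((f.compRight R).lTensor C)
    (LinearMap.ker f).subtype f _ _ _
    (tensorHomCounit_comp_lTensor_compRight _).symm (tensorHomCounit_comp_lTensor_compRight _).symm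
    (lTensor_exact C (exact_compRight_ker_subtype f) hfC) f.exact_subtype_ker_map
    hker hN (LinearMap.lTensor_surjective C hfC) hf

end TensorHom

section CProjective

variable {R C M N : Type} [CommRing R] [AddCommGroup C] [Module R C] [AddCommGroup M] [Module R M]
  [AddCommGroup N] [Module R N] {n : ℕ}

lemma pdLE.of_equiv (e : M ≃ₗ[R] N) (h : pdLE R n M inferInstance inferInstance) :
    pdLE R n N inferInstance inferInstance := by
  cases n with
  | zero =>
    have : Module.Projective R M := h
    exact Module.Projective.of_equiv e
  | succ n =>
    obtain ⟨P, _, _, f, hP, hf, hker⟩ := h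
    refine ⟨P, _, _, e.toLinearMap ∘ₗ f, hP, e.surjective.comp hf, ?_⟩
    rwa [LinearEquiv.ker_comp e f]

lemma IsSemidualizing.subsingleton_abelianExt (hC : IsSemidualizing R C) (i : ℕ) :
    Subsingleton (Abelian.Ext.{0} (ModuleCat.of R C) (ModuleCat.of R C) (i + 1)) :=
  have : Subsingleton (((Ext R (ModuleCat R) (i + 1)).obj (.op (.of R C))).obj (.of R C)) :=
    hC.2.2 (i + 1) i.succ_pos
  subsingleton_abelianExt_succ_of_subsingleton_ext R i

lemma IsSemidualizing.bijective_tensorHomUnit (hC : IsSemidualizing R C) (P : Type)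
    [AddCommGroup P] [Module R P] [Module.Projective R P] :
    Function.Bijective (tensorHomUnit R C P) :=
  have := hC.1
  bijective_tensorHomUnit_of_projective hC.2.1

variable [IsNoetherianRing R]

lemma IsSemidualizing.subsingleton_abelianExt_tensorProduct (hC : IsSemidualizing R C) (P : Type)
    [AddCommGroup P] [Module R P] [Module.Projective R P] (i : ℕ) :
    Subsingleton (Abelian.Ext.{0} (ModuleCat.of R C) (ModuleCat.of R (C ⊗[R] P)) (i + 1)) :=
  have : Module.Finite R (ModuleCat.of R C) := hC.1
  have := hC.subsingleton_abelianExt i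
  subsingleton_abelianExt_tensorProduct_of_projective _ P (i + 1)

lemma CpdLE.subsingleton_abelianExt (hC : IsSemidualizing R C)
    (hM : CpdLE R C n M inferInstance inferInstance) (i : ℕ) :
    Subsingleton (Abelian.Ext.{0} (ModuleCat.of R C) (ModuleCat.of R M) (i + 1)) := by
  induction n generalizing M i with
  | zero =>
    obtain ⟨P, _, _, _, ⟨e⟩⟩ := hM
    have := hC.subsingleton_abelianExt_tensorProduct P i
    exact subsingleton_abelianExt_of_retract (.ofIso e.toModuleIso.symm) (i + 1)
  | succ n ih =>
    obtain ⟨P, _, _, f, _, hf, hker⟩ := hM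
    have := hC.subsingleton_abelianExt_tensorProduct P i
    have := ih hker (i + 1)
    exact subsingleton_abelianExt_X₃ (LinearMap.shortExact_shortComplexKer hf) _ (i + 1)

lemma CpdLE.compRight_surjective (hC : IsSemidualizing R C) {f : N →ₗ[R] M}
    (hf : Function.Surjective f)
    (hker : CpdLE R C n (LinearMap.ker f) inferInstance inferInstance) :
    Function.Surjective (f.compRight R : (C →ₗ[R] N) →ₗ[R] (C →ₗ[R] M)) :=
  have := hker.subsingleton_abelianExt hC 0
  compRight_surjective_of_subsingleton_abelianExt_one hf

lemma CpdLE.pdLE_hom (hC : IsSemidualizing R C)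
    (hM : CpdLE R C n M inferInstance inferInstance) :
    pdLE R n (C →ₗ[R] M) inferInstance inferInstance := by
  induction n generalizing M with
  | zero =>
    obtain ⟨P, _, _, _, ⟨e⟩⟩ := hM
    exact Module.Projective.of_equiv
      (LinearEquiv.ofBijective _ (hC.bijective_tensorHomUnit P) ≪≫ₗ e.congrRight)
  | succ n ih =>
    obtain ⟨P, _, _, f, _, hf, hker⟩ := hM
    have hP : Module.Projective R (C →ₗ[R] C ⊗[R] P) :=
      .of_equiv (LinearEquiv.ofBijective _ (hC.bijective_tensorHomUnit P))
    exact ⟨_, _, _, f.compRight R, hP, hker.compRight_surjective hC hf,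
      (ih hker).of_equiv (homKerEquiv C f)⟩

lemma CpdLE.bijective_tensorHomCounit (hC : IsSemidualizing R C)
    (hM : CpdLE R C n M inferInstance inferInstance) :
    Function.Bijective (tensorHomCounit R C M) := by
  induction n generalizing M with
  | zero =>
    obtain ⟨P, _, _, _, ⟨e⟩⟩ := hM
    exact bijective_tensorHomCounit_of_equiv e
      (bijective_tensorHomCounit_tensorProduct (hC.bijective_tensorHomUnit P))
  | succ n ih =>
    obtain ⟨P, _, _, f, _, hf, hker⟩ := hM
    exact bijective_tensorHomCounit_of_surjective hf (hker.compRight_surjective hC hf)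
      (bijective_tensorHomCounit_tensorProduct (hC.bijective_tensorHomUnit P)) (ih hker).2

end CProjective

theorem finite_Cpd_mem_Bass_class_general {R : Type} [CommRing R] [IsNoetherianRing R]
    {C : Type} [AddCommGroup C] [Module R C] (hC : IsSemidualizing R C)
    {M : Type} [AddCommGroup M] [Module R M] {n : ℕ}
    (hM : CpdLE R C n M inferInstance inferInstance) :
    (Module.Finite R M → Module.Finite R (C →ₗ[R] M)) ∧
    pdLE R n (C →ₗ[R] M) inferInstance inferInstance ∧
    Function.Bijective
      (TensorProduct.lift ((LinearMap.id : (C →ₗ[R] M) →ₗ[R] (C →ₗ[R] M)).flip)) ∧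
    (Nontrivial M → Nontrivial (C →ₗ[R] M)) := by
  have := hC.1
  have hbij := hM.bijective_tensorHomCounit hC
  refine ⟨fun _ => inferInstance, hM.pdLE_hom hC, hbij, fun hM₀ => ?_⟩
  contrapose! hM₀
  exact hbij.2.subsingleton

/-- If `C` is semidualizing and `M` is finitely generated of finite `C`-projective dimension
over a noetherian local ring, then `Hom_R(C,M)` is finitely generated of finite projective
dimension, the evaluation map `C ⊗ Hom_R(C,M) → M` is an isomorphism, and `Hom_R(C,M) ≠ 0`
whenever `M ≠ 0`. -/
theorem finite_Cpd_mem_Bass_class (R : Type) [CommRing R] [IsNoetherianRing R] [IsLocalRing R]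
    (C : Type) [AddCommGroup C] [Module R C] (hC : IsSemidualizing R C)
    (M : Type) [AddCommGroup M] [Module R M] [Module.Finite R M]
    (hCpd : ∃ n : ℕ, CpdLE R C n M inferInstance inferInstance) :
    Module.Finite R (C →ₗ[R] M) ∧
    (∃ n : ℕ, pdLE R n (C →ₗ[R] M) inferInstance inferInstance) ∧
    Function.Bijective
      (TensorProduct.lift ((LinearMap.id : (C →ₗ[R] M) →ₗ[R] (C →ₗ[R] M)).flip)) ∧
    (Nontrivial M → Nontrivial (C →ₗ[R] M)) := by
  obtain ⟨n, hM⟩ := hCpd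
  obtain ⟨hfin, hpd, hbij, hnt⟩ := finite_Cpd_mem_Bass_class_general hC hM
  exact ⟨hfin inferInstance, ⟨n, hpd⟩, hbij, hnt⟩
end
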